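/- arXiv:2310.17295 — 15 statements merged into one kernel-verified Lean document; each statement's English description precedes it below -/
import Mathlib

section
/- Let K be a Kleene algebra and u, x, v, y ∈ K. If (x + u·y·v)^* ≤ y, then, writing N := (x + u·y·v)^*, one has 1 + x + u·N·v + N·N ≤ N. -/
open Computability

theorem stmt_1 {K : Type*} [KleeneAlgebra K] (u x v y : K)
    (h : (x + u * y * v)∗ ≤ y) :
    1 + x + u * (x + u * y * v)∗ * v + (x + u * y * v)∗ * (x + u * y * v)∗ ≤
      (x + u * y * v)∗ := by
  have hle : x + u * y * v ≤ (x + u * y * v)∗ := le_kstar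
  obtain ⟨hx, huv⟩ := add_le_iff.1 hle
  -- The hypothesis is needed only here: by monotonicity `u * N * v ≤ u * y * v ≤ N`.
  have hN : u * (x + u * y * v)∗ * v ≤ (x + u * y * v)∗ :=
    (mul_le_mul_left (mul_le_mul_right h u) v).trans huv
  exact add_le (add_le (add_le one_le_kstar hx) hN) (kstar_mul_kstar _).le
end

section
/- Let K be a Kleene algebra and u, x, v ∈ K. Suppose N ∈ K is the least solution of the inequation (x + u·y·v)^* ≤ y, i.e. (x + u·N·v)^* ≤ N and N ≤ y for every y ∈ K with (x + u·y·v)^* ≤ y. Then N = (x + u·N·v)^*, and N is the least solution of the inequation 1 + x + u·y·v + y·y ≤ y, i.e. 1 + x + u·N·v + N·N ≤ N and N ≤ y for every y with 1 + x + u·y·v + y·y ≤ y. -/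
/-!
The map `t y = (x + u * y * v)∗` is monotone, so `t N ≤ N` gives `t (t N) ≤ t N`, and leastness of
`N` yields `N = t N` (the Knaster–Tarski argument). Being a star, `N` is reflexive, multiplicatively
idempotent and above `x + u * N * v`. Conversely, any `y` with `1 + x + u * y * v + y * y ≤ y` is
a reflexive transitive element above `x + u * y * v`, hence above `t y`, hence above `N`.
-/

open Computability

theorem stmt_2 {K : Type*} [KleeneAlgebra K] (u x v N : K)
    (hN : (x + u * N * v)∗ ≤ N)
    (hleast : ∀ y : K, (x + u * y * v)∗ ≤ y → N ≤ y) :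
    N = (x + u * N * v)∗ ∧
      (1 + x + u * N * v + N * N ≤ N ∧
        ∀ y : K, 1 + x + u * y * v + y * y ≤ y → N ≤ y) := by
  have hfix : N = (x + u * N * v)∗ := by
    refine le_antisymm (hleast _ (kstar_mono ?_)) hN
    gcongr
  refine ⟨hfix, ?_, fun y hy => hleast y ?_⟩
  · have h1 : 1 ≤ N := one_le_kstar.trans hN
    have ha : x + u * N * v ≤ N := le_kstar.trans hN
    have hNN : N * N = N := by
      rw [hfix]
      exact kstar_mul_kstar _
    rw [add_assoc 1 x]
    exact add_le (add_le h1 ha) hNN.le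
  · rw [add_assoc 1 x, add_le_iff, add_le_iff] at hy
    obtain ⟨⟨h1, ha⟩, hyy⟩ := hy
    exact kstar_le_of_mul_le_left h1 ((mul_le_mul_right ha y).trans hyy)
end

section
/- Let K be a Kleene algebra and u, x, v ∈ K. Suppose D ∈ K is the least solution of the inequation 1 + x + u·y·v + y·y ≤ y, i.e. 1 + x + u·D·v + D·D ≤ D and D ≤ y for every y with 1 + x + u·y·v + y·y ≤ y. Then D = 1 + x + u·D·v + D·D, and D is the least solution of the inequation (x + u·y·v)^* ≤ y, i.e. (x + u·D·v)^* ≤ D and D ≤ y for every y with (x + u·y·v)^* ≤ y. -/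
/-!
A solution `D` of the quadratic inequation satisfies `1 ≤ D` and `D * D ≤ D`, so it is its own star
and contains the star of anything below it, in particular of `x + u * D * v`. Conversely, if
`(x + u * y * v)∗ ≤ y`, then the element `(x + u * y * v)∗` itself solves the quadratic inequation,
so minimality of `D` puts `D` below it and hence below `y`.
-/

open Computability

theorem stmt_3 {K : Type*} [KleeneAlgebra K] (u x v D : K)
    (hD : 1 + x + u * D * v + D * D ≤ D)
    (hleast : ∀ y : K, 1 + x + u * y * v + y * y ≤ y → D ≤ y) :
    D = 1 + x + u * D * v + D * D ∧
      ((x + u * D * v)∗ ≤ D ∧ ∀ y : K, (x + u * y * v)∗ ≤ y → D ≤ y) := by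
  have h := hD
  rw [add_le_iff, add_le_iff, add_le_iff] at h
  obtain ⟨⟨⟨h1, hx⟩, hu⟩, hDD⟩ := h
  refine ⟨le_antisymm ?_ hD, ?_, fun y hy => ?_⟩
  · -- Since `1 ≤ D`, already the summand `D * D` dominates `D`.
    exact (le_mul_of_one_le_left' h1).trans le_add_self
  · exact kstar_le_of_mul_le_left h1 ((mul_le_mul_right (add_le hx hu) D).trans hDD)
  · -- `y` need not be closed under multiplication, but the star below it is: it solves the
    -- quadratic inequation, because `u * _ * v` is monotone.
    refine (hleast (x + u * y * v)∗ ?_).trans hy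
    have hmono : u * (x + u * y * v)∗ * v ≤ u * y * v := by gcongr
    exact add_le (add_le (add_le one_le_kstar (le_self_add.trans le_kstar))
      (hmono.trans (le_add_self.trans le_kstar))) (kstar_mul_kstar _).le
end

section
/- Let K be a Kleene algebra and x, u, v ∈ K. Suppose N ∈ K is the least solution of the inequation (x + u·y·v)^* ≤ y, i.e. (x + u·N·v)^* ≤ N and N ≤ y for every y ∈ K with (x + u·y·v)^* ≤ y. Then (u + x + v)^* = (N·v)^* · N · (u·N)^*. -/
open Computability

/-!
Put `t y = (x + u * y * v)∗`. Since `t` is monotone and `N` is its least pre-fixed point, `N = t N`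
is itself a star: `1 ≤ N`, `N * N ≤ N`, `x ≤ N` and `u * N * v ≤ N`.

For `≤`, it is enough that `R = (N * v)∗ * N * (u * N)∗` lies above `1` and is closed under left
multiplication by `u`, `x` and `v`. Writing `P = (N * v)∗ * N`, the relation `N * N ≤ N` gives
`N * P ≤ P`, which takes care of `x` and `v`. Unfolding the star in `u * P` once gives
`u * P ≤ u * N + P`: an opening bracket either meets a closing one and is absorbed into `N`, or it
passes through to the factor `(u * N)∗`.

For `≥`, the element `(u + x + v)∗` is a pre-fixed point of `t`, hence lies above `N`, and it is
closed under products and stars.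
-/

theorem stmt_4 {K : Type*} [KleeneAlgebra K] (x u v N : K)
    (hN : (x + u * N * v)∗ ≤ N)
    (hleast : ∀ y : K, (x + u * y * v)∗ ≤ y → N ≤ y) :
    (u + x + v)∗ = (N * v)∗ * N * (u * N)∗ := by
  have hfix : (x + u * N * v)∗ = N := by
    refine le_antisymm hN (hleast _ (kstar_mono ?_))
    grw [hN]
  have h1 : 1 ≤ N := one_le_kstar.trans hN
  have hNN : N * N ≤ N := by
    conv_lhs => rw [← hfix, kstar_mul_kstar]
    exact hN
  obtain ⟨hx, hb⟩ := add_le_iff.1 (le_kstar.trans hN)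
  apply le_antisymm
  · obtain ⟨P, hP⟩ : ∃ P, P = (N * v)∗ * N := ⟨_, rfl⟩
    rw [← hP]
    have hNvP : N * v * P ≤ P := by
      rw [hP, ← mul_assoc]
      grw [mul_kstar_le_kstar]
    -- one unfolding of the star in `P`
    have hPe : P = N + N * v * P := by
      conv_lhs => rw [hP, ← one_add_mul_kstar, add_mul, one_mul, mul_assoc, ← hP]
    have hle : N ≤ P := by
      conv_rhs => rw [hPe]
      exact le_add_of_nonneg_right (zero_le)
    have hNP : N * P ≤ P := by
      conv_lhs => rw [hPe, mul_add, ← mul_assoc N (N * v), ← mul_assoc N N]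
      grw [hNN, hNvP]
      exact add_le hle le_rfl
    have hvP : v * P ≤ P := calc
      v * P = 1 * v * P := by rw [one_mul]
      _ ≤ N * v * P := by grw [h1]
      _ ≤ P := hNvP
    have hxP : x * P ≤ P := by grw [hx, hNP]
    have huP : u * P ≤ u * N + P := by
      conv_lhs => rw [hPe, mul_add, ← mul_assoc u (N * v), ← mul_assoc u N]
      grw [hb, hNP]
    have h1P : 1 ≤ P := h1.trans hle
    apply kstar_le_of_mul_le_right
    · calc (1 : K) = 1 * 1 := (one_mul 1).symm
        _ ≤ P * (u * N)∗ := mul_le_mul' h1P one_le_kstar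
    · rw [add_mul, add_mul]
      refine add_le (add_le ?_ ?_) ?_
      · calc u * (P * (u * N)∗) = u * P * (u * N)∗ := (mul_assoc _ _ _).symm
          _ ≤ (u * N + P) * (u * N)∗ := by grw [huP]
          _ = 1 * (u * N * (u * N)∗) + P * (u * N)∗ := by rw [add_mul, one_mul]
          _ ≤ P * (u * N)∗ :=
            add_le (mul_le_mul' h1P mul_kstar_le_kstar) le_rfl
      · rw [← mul_assoc]; grw [hxP]
      · rw [← mul_assoc]; grw [hvP]
  · set S := (u + x + v)∗ with hS
    obtain ⟨hux, hvS⟩ := add_le_iff.1 (le_kstar : u + x + v ≤ S)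
    obtain ⟨huS, hxS⟩ := add_le_iff.1 hux
    have hSS : S * S = S := kstar_mul_kstar _
    have hstar : ∀ a, a ≤ S → a∗ ≤ S := fun a ha =>
      (kstar_mono ha).trans (kstar_idem _).le
    have hmul : ∀ a b, a ≤ S → b ≤ S → a * b ≤ S := fun a b ha hb' =>
      (mul_le_mul' ha hb').trans hSS.le
    have hNS : N ≤ S :=
      hleast _ (hstar _ (add_le hxS (hmul _ _ (hmul _ _ huS le_rfl) hvS)))
    exact hmul _ _ (hmul _ _ (hstar _ (hmul _ _ hNS hvS)) hNS)
      (hstar _ (hmul _ _ huS hNS))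
end

section
/- Let K be a Kleene algebra and x, u, v ∈ K. Then (x + u·(u + x + v)^*·v)^* ≤ (u + x + v)^*; that is, (u+x+v)^* is itself a solution of the inequation (x + u·y·v)^* ≤ y. -/
open Computability

theorem stmt_5 {K : Type*} [KleeneAlgebra K] (x u v : K) :
    (x + u * (u + x + v)∗ * v)∗ ≤ (u + x + v)∗ := by
  have hx : x ≤ (u + x + v)∗ := le_trans (le_add_self.trans le_self_add) le_kstar
  have hu : u ≤ (u + x + v)∗ := le_trans (le_self_add.trans le_self_add) le_kstar
  have hv : v ≤ (u + x + v)∗ := le_trans le_add_self le_kstar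
  have huv : u * (u + x + v)∗ * v ≤ (u + x + v)∗ :=
    (mul_le_mul' (mul_le_mul' hu le_rfl) hv).trans_eq (by rw [kstar_mul_kstar, kstar_mul_kstar])
  -- A star is itself closed under star, so it suffices to bound the starred element.
  exact (kstar_mono (add_le hx huv)).trans_eq (kstar_idem _)
end

section
/- Let K be a Kleene algebra and x, u, v, N ∈ K. If (x + u·N·v)·N + 1 ≤ N, then (u + x + v)·((N·v)^*·N·(u·N)^*) + 1 ≤ (N·v)^*·N·(u·N)^*, and consequently (u + x + v)^* ≤ (N·v)^* · N · (u·N)^*. -/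
open Computability

/-!
Read `u` as a push, `v` as a pop and `N` as a set of balanced words closed under prefixing by `x`
and by `u * N * v`. Then `W = (N * v)∗ * N * (u * N)∗` collects the words made of unmatched pops,
then a balanced word, then unmatched pushes. Prefixing a letter keeps this shape: `v` is an extra
unmatched pop, `x` is absorbed by the first balanced block, and `u` is either an unmatched push
(no pop follows) or is matched with the first pop, so that `u * N * v` is absorbed by the next
balanced block (`mul_kstar_mul_le_of_mul_le`). Hence `W` is a pre-fixed point of
`W ↦ (u + x + v) * W + 1`, and star induction bounds `(u + x + v)∗`.
-/

/-- Whatever is absorbed on the left by `N` is absorbed by `(N * v)∗ * N`: every term of the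
unfolding `(N * v)∗ = 1 + N * v * (N * v)∗` leaves a factor `N` in front. -/
lemma mul_kstar_mul_le_of_mul_le {K : Type*} [KleeneAlgebra K] {y v N : K} (hy : y * N ≤ N) :
    y * ((N * v)∗ * N) ≤ (N * v)∗ * N :=
  calc y * ((N * v)∗ * N) = y * N + y * N * (v * (N * v)∗ * N) := by
        conv_lhs => rw [← one_add_mul_kstar (a := N * v)]
        simp only [add_mul, mul_add, one_mul, mul_assoc]
    _ ≤ N + N * (v * (N * v)∗ * N) := by gcongr
    _ = (1 + N * v * (N * v)∗) * N := by simp only [add_mul, one_mul, mul_assoc]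
    _ = (N * v)∗ * N := by rw [one_add_mul_kstar]

theorem stmt_6 {K : Type*} [KleeneAlgebra K] (x u v N : K)
    (h : (x + u * N * v) * N + 1 ≤ N) :
    (u + x + v) * ((N * v)∗ * N * (u * N)∗) + 1 ≤ (N * v)∗ * N * (u * N)∗ ∧
      (u + x + v)∗ ≤ (N * v)∗ * N * (u * N)∗ := by
  rw [add_mul, add_le_iff, add_le_iff] at h
  obtain ⟨⟨hx, huv⟩, hN⟩ := h
  have absorb {y : K} (hy : y * N ≤ N) :
      y * ((N * v)∗ * N * (u * N)∗) ≤ (N * v)∗ * N * (u * N)∗ := by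
    rw [← mul_assoc]
    exact mul_le_mul_left (mul_kstar_mul_le_of_mul_le hy) _
  have hA : 1 ≤ (N * v)∗ * N := one_le_mul one_le_kstar hN
  have hv : v * ((N * v)∗ * N * (u * N)∗) ≤ (N * v)∗ * N * (u * N)∗ := by
    have : v * (N * v)∗ ≤ (N * v)∗ :=
      (mul_le_mul_left (le_mul_of_one_le_left' hN) _).trans mul_kstar_le_kstar
    simp only [← mul_assoc]
    gcongr
  have hu : u * ((N * v)∗ * N * (u * N)∗) ≤ (N * v)∗ * N * (u * N)∗ :=
    calc u * ((N * v)∗ * N * (u * N)∗)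
        = u * N * (u * N)∗ + u * N * v * ((N * v)∗ * N * (u * N)∗) := by
          conv_lhs => rw [← one_add_mul_kstar (a := N * v)]
          simp only [add_mul, mul_add, one_mul, mul_assoc]
      _ ≤ (N * v)∗ * N * (u * N)∗ :=
          add_le (mul_kstar_le_kstar.trans (le_mul_of_one_le_left' hA)) (absorb huv)
  have hW : (u + x + v) * ((N * v)∗ * N * (u * N)∗) ≤ (N * v)∗ * N * (u * N)∗ := by
    rw [add_mul, add_mul]
    exact add_le (add_le hu (absorb hx)) hv
  have h1 : 1 ≤ (N * v)∗ * N * (u * N)∗ := one_le_mul hA one_le_kstar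
  exact ⟨add_le hW h1, kstar_le_of_mul_le_right h1 hW⟩
end

section
/- Let S be a semiring, m ∈ ℕ, and p, q : Fin m → S families of elements satisfying the match equations p i · q j = 1 if i = j and p i · q j = 0 if i ≠ j (for all i, j < m), and the completeness equation ∑_{i<m} q i · p i = 1. Then the map sending a ∈ S to the m×m matrix (p i · a · q j)_{i,j} is a semiring isomorphism from S onto the matrix semiring Matrix (Fin m) (Fin m) S, with inverse sending a matrix A to ∑_{i,j<m} q i · A i j · p j. -/
/-!
Inserting the completeness equation `1 = ∑ k, q k * p k` between two factors turns
`p i * (a * b) * q j` into the `(i, j)` entry of a matrix product, and inserting it on both sides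
of `a` recovers `a` from its matrix. The match equations collapse
`p k * (∑ i j, q i * A i j * p j) * q l` to its single surviving term `A k l`.
-/

theorem stmt_8 {S : Type*} [Semiring S] (m : ℕ) (p q : Fin m → S)
    (hmatch : ∀ i j : Fin m, p i * q j = if i = j then 1 else 0)
    (hcomplete : ∑ i : Fin m, q i * p i = 1) :
    ∃ e : S ≃+* Matrix (Fin m) (Fin m) S,
      (∀ (a : S) (i j : Fin m), e a i j = p i * a * q j) ∧
      (∀ A : Matrix (Fin m) (Fin m) S, e.symm A = ∑ i : Fin m, ∑ j : Fin m, q i * A i j * p j) := by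
  refine ⟨{ toFun := fun a => Matrix.of fun i j => p i * a * q j
            invFun := fun A => ∑ i : Fin m, ∑ j : Fin m, q i * A i j * p j
            left_inv := ?_
            right_inv := ?_
            map_mul' := ?_
            map_add' := ?_ }, fun _ _ _ => rfl, fun _ => rfl⟩
  · intro a
    calc ∑ i, ∑ j, q i * (p i * a * q j) * p j
        = (∑ i, q i * p i) * a * ∑ j, q j * p j := by
          simp only [Finset.sum_mul, Finset.mul_sum, mul_assoc]
          exact Finset.sum_comm
      _ = a := by rw [hcomplete, one_mul, mul_one]
  · intro A
    ext k l
    calc p k * (∑ i, ∑ j, q i * A i j * p j) * q l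
        = ∑ i, ∑ j, (p k * q i) * A i j * (p j * q l) := by
          simp only [Finset.sum_mul, Finset.mul_sum, mul_assoc]
      _ = A k l := by simp [hmatch]
  · intro a b
    ext i j
    calc p i * (a * b) * q j
        = p i * a * (∑ k, q k * p k) * b * q j := by
          rw [hcomplete, mul_one, mul_assoc (p i) a b]
      _ = ∑ k, (p i * a * q k) * (p k * b * q j) := by
          simp only [Finset.sum_mul, Finset.mul_sum, mul_assoc]
  · intro a b
    ext i j
    simp [mul_add, add_mul]
end

section
/- Let S be a semiring and b, p, d, q ∈ S elements satisfying d·b + q·p = 1. Then for every n ∈ ℕ: (∑_{i<n} q^i · (d·b) · p^i) + q^n · p^n = 1. -/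
theorem stmt_9 {S : Type*} [Semiring S] (b p d q : S)
    (h : d * b + q * p = 1) (n : ℕ) :
    (∑ i ∈ Finset.range n, q ^ i * (d * b) * p ^ i) + q ^ n * p ^ n = 1 := by
  induction n with
  | zero => simp
  | succ n ih =>
    -- Inserting `1 = d * b + q * p` in the middle of `q ^ n * p ^ n` splits off the next summand.
    have key : q ^ n * (d * b) * p ^ n + q ^ (n + 1) * p ^ (n + 1) = q ^ n * p ^ n := by
      calc q ^ n * (d * b) * p ^ n + q ^ (n + 1) * p ^ (n + 1)
          = q ^ n * (d * b + q * p) * p ^ n := by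
            rw [pow_succ q, pow_succ' p]
            simp only [mul_add, add_mul, mul_assoc]
        _ = q ^ n * p ^ n := by rw [h, mul_one]
    rw [Finset.sum_range_succ, add_assoc, key, ih]
end

section
/- Let M be a monoid with zero and b, p, q, d ∈ M elements satisfying b·d = 1, p·q = 1, b·q = 0, and p·d = 0. Then for all i, j ∈ ℕ: (1) b·p^{i+1}·q^{j+1}·d = 1 if i = j and = 0 if i ≠ j; (2) b·q^{j+1}·d = 0; and (3) b·p^{i+1}·d = 0. -/
/-- Adjacent factors `p * q = 1` cancel from the middle, so both exponents drop together. When one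
of them reaches `0`, what is left is `b * d = 1`, or a word containing `b * q = 0` or `p * d = 0`.
Allowing exponent `0` here makes all three equations of `stmt_10` instances of this one. -/
theorem bracket_pow_mul_pow {M : Type*} [MonoidWithZero M] (b p q d : M)
    (hbd : b * d = 1) (hpq : p * q = 1) (hbq : b * q = 0) (hpd : p * d = 0) (i j : ℕ) :
    b * p ^ i * q ^ j * d = if i = j then 1 else 0 := by
  induction i generalizing j with
  | zero =>
    cases j with
    | zero => simp [hbd]
    | succ j => simp [pow_succ', ← mul_assoc, hbq]
  | succ i ih =>
    cases j with
    | zero => simp [pow_succ, mul_assoc, hpd]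
    | succ j =>
      have h : b * p ^ (i + 1) * q ^ (j + 1) * d = b * p ^ i * (p * q) * q ^ j * d := by
        rw [pow_succ p, pow_succ' q]
        simp only [mul_assoc]
      rw [h, hpq, mul_one, ih]
      simp

theorem stmt_10 {M : Type*} [MonoidWithZero M] (b p q d : M)
    (hbd : b * d = 1) (hpq : p * q = 1) (hbq : b * q = 0) (hpd : p * d = 0)
    (i j : ℕ) :
    (b * p ^ (i + 1) * q ^ (j + 1) * d = if i = j then 1 else 0) ∧
      b * q ^ (j + 1) * d = 0 ∧ b * p ^ (i + 1) * d = 0 := by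
  have key := bracket_pow_mul_pow b p q d hbd hpq hbq hpd
  refine ⟨?_, ?_, ?_⟩
  · simpa using key (i + 1) (j + 1)
  · simpa using key 0 (j + 1)
  · simpa using key (i + 1) 0
end

section
/- Let m ∈ ℕ and let A be the four-element alphabet {b, p, d, q}. The monoid homomorphism h from the free monoid on Fin m ⊕ Fin m to the free monoid on A determined on generators by h(inl i) = b·p^{i+1} (the word consisting of the letter b followed by i+1 copies of the letter p) and h(inr i) = q^{i+1}·d (i+1 copies of the letter q followed by the letter d) is injective. -/
/-!
A coded word is empty or begins with `b` or `q`, never with `p`. Hence it determines the letter it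
starts with: `b` against `q` tells a code word `b p^{i+1}` from a code word `q^{i+1} d`, and `i` is
read off from the length of the maximal block of `p`'s after `b` (a block that the following code
word cannot prolong), respectively of the maximal initial block of `q`'s (which `d` terminates).
Cancelling this code word leaves the coding of the tail, and induction finishes. The coding is
handled as a function on lists, `encode`.
-/

/-- The four-letter alphabet `{b, p, d, q}` of two bracket pairs. -/
inductive Letter : Type
  | b | p | d | q

/-- The coding of a letter as a list: `inl i ↦ b p^{i+1}`, `inr i ↦ q^{i+1} d`. -/
def codeWord {m : ℕ} : Fin m ⊕ Fin m → List Letter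
  | .inl i => .b :: List.replicate (i + 1) .p
  | .inr i => List.replicate (i + 1) .q ++ [.d]

/-- The coding of a word, as a map between lists. -/
def encode {m : ℕ} (w : List (Fin m ⊕ Fin m)) : List Letter := w.flatMap codeWord

theorem encode_inl {m : ℕ} (i : Fin m) (w : List (Fin m ⊕ Fin m)) :
    encode (.inl i :: w) = .b :: (List.replicate (i + 1) .p ++ encode w) := by
  simp [encode, codeWord]

theorem encode_inr {m : ℕ} (i : Fin m) (w : List (Fin m ⊕ Fin m)) :
    encode (.inr i :: w) = List.replicate (i + 1) .q ++ .d :: encode w := by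
  simp [encode, codeWord]

theorem head?_encode_ne_p {m : ℕ} (w : List (Fin m ⊕ Fin m)) :
    (encode w).head? ≠ some .p := by
  rcases w with _ | ⟨i | i, w⟩
  · simp [encode]
  · simp [encode_inl]
  · simp [encode_inr, List.replicate_succ]

/-- A maximal initial block of a repeated letter can be read off from the word. -/
theorem replicate_append_cancel {α : Type*} {x : α} {u v : List α}
    (hu : u.head? ≠ some x) (hv : v.head? ≠ some x) :
    ∀ {a c : ℕ}, List.replicate a x ++ u = List.replicate c x ++ v → a = c ∧ u = v
  | 0, 0, h => ⟨rfl, by simpa using h⟩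
  | 0, c + 1, h => by
    have h' : u = x :: (List.replicate c x ++ v) := by simpa [List.replicate_succ] using h
    simp [h'] at hu
  | a + 1, 0, h => by
    have h' : x :: (List.replicate a x ++ u) = v := by simpa [List.replicate_succ] using h
    simp [← h'] at hv
  | a + 1, c + 1, h => by
    have h' : List.replicate a x ++ u = List.replicate c x ++ v := by
      simpa [List.replicate_succ] using h
    obtain ⟨h₁, h₂⟩ := replicate_append_cancel hu hv h'
    exact ⟨by rw [h₁], h₂⟩

theorem encode_injective {m : ℕ} :
    ∀ {w w' : List (Fin m ⊕ Fin m)}, encode w = encode w' → w = w'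
  | [], [], _ => rfl
  | [], .inl _ :: _, h => by rw [encode_inl] at h; simp [encode] at h
  | [], .inr _ :: _, h => by rw [encode_inr] at h; simp [encode] at h
  | .inl _ :: _, [], h => by rw [encode_inl] at h; simp [encode] at h
  | .inr _ :: _, [], h => by rw [encode_inr] at h; simp [encode] at h
  | .inl _ :: _, .inr _ :: _, h => by simp [encode_inl, encode_inr, List.replicate_succ] at h
  | .inr _ :: _, .inl _ :: _, h => by simp [encode_inl, encode_inr, List.replicate_succ] at h
  | .inl i :: w, .inl j :: w', h => by
    rw [encode_inl, encode_inl, List.cons.injEq] at h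
    obtain ⟨hij, hw⟩ :=
      replicate_append_cancel (head?_encode_ne_p w) (head?_encode_ne_p w') h.2
    rw [Fin.ext (Nat.succ.inj hij), encode_injective hw]
  | .inr i :: w, .inr j :: w', h => by
    rw [encode_inr, encode_inr] at h
    obtain ⟨hij, hw⟩ := replicate_append_cancel (by simp) (by simp) h
    rw [Fin.ext (Nat.succ.inj hij), encode_injective (List.cons.inj hw).2]

theorem toList_of_pow {α : Type*} (x : α) (n : ℕ) :
    FreeMonoid.toList (FreeMonoid.of x ^ n) = List.replicate n x := by
  induction n with
  | zero => rfl
  | succ n ih => rw [pow_succ', FreeMonoid.toList_mul, ih]; rfl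

open Letter FreeMonoid in
/-- The bracket coding `p_i ↦ b p^{i+1}`, `q_i ↦ q^{i+1} d` is injective on the
free monoid, i.e. the set of code words is uniquely decodable. -/
theorem stmt_11 (m : ℕ) :
    Function.Injective
      (FreeMonoid.lift
        (Sum.elim
          (fun i : Fin m => FreeMonoid.of Letter.b * (FreeMonoid.of Letter.p) ^ ((i : ℕ) + 1))
          (fun i : Fin m => (FreeMonoid.of Letter.q) ^ ((i : ℕ) + 1) * FreeMonoid.of Letter.d)) :
        FreeMonoid (Fin m ⊕ Fin m) →* FreeMonoid Letter) := by
  set f : Fin m ⊕ Fin m → FreeMonoid Letter := Sum.elim _ _ with hf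
  have key : ∀ w : FreeMonoid (Fin m ⊕ Fin m),
      FreeMonoid.toList (FreeMonoid.lift f w) = encode (FreeMonoid.toList w) := by
    intro w
    induction w using FreeMonoid.inductionOn' with
    | one => simp [encode]
    | of_mul x w ih =>
      rw [map_mul, FreeMonoid.toList_mul, ih, FreeMonoid.lift_eval_of, FreeMonoid.toList_of_mul]
      rcases x with i | i
      · simp [hf, encode_inl, FreeMonoid.toList_mul, toList_of_pow]
      · simp [hf, encode_inr, FreeMonoid.toList_mul, toList_of_pow]
  intro w w' h
  refine FreeMonoid.toList.injective (encode_injective ?_)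
  rw [← key, ← key, h]
end

section
/- Let m ≥ 1 and let Y be the alphabet consisting of letters p_0, …, p_{m−1}, q_0, …, q_{m−1}, and a letter z (the formal zero). Let σ be the monoid congruence on the free monoid over Y generated by the relations: p_i·q_i ~ 1 (the empty word) for all i < m; p_i·q_j ~ z for all i ≠ j < m; and y·z ~ z and z·y ~ z for every letter y ∈ Y. Then every word w over Y is σ-congruent either to the one-letter word z or to a word of the form v·u where v is a word using only the letters q_0,…,q_{m−1} and u is a word using only the letters p_0,…,p_{m−1}. -/
/-!
The set of words that are congruent to `z` or to some `v * u` (`v` closing, `u` opening) contains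
the empty word and is stable under multiplication on the left by a letter, so it is everything.
Stability is clear for a closing letter, which is absorbed into `v`, and for `z`, because
`z * w ~ z` for every word `w` (`polyRel_z_mul`). An opening letter `p i` is absorbed into `u`
when `v` is empty. If `v = q j * v'`, it cancels with `q j` for `i = j`, and produces a `z`
that annihilates the remaining word for `i ≠ j`.
-/

/-- The alphabet with opening brackets `p i`, closing brackets `q i` and a
formal zero letter `z`. -/
inductive PolyLetter (m : ℕ) : Type
  | p (i : Fin m)
  | q (i : Fin m)
  | z

open PolyLetter in
/-- The generating relations of the polycyclic monoid `P_m'`: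
match `p_i q_i ~ 1`, mismatch `p_i q_j ~ z` for `i ≠ j`, and `z` annihilating. -/
def polyRel (m : ℕ) : FreeMonoid (PolyLetter m) → FreeMonoid (PolyLetter m) → Prop :=
  fun a b =>
    (∃ i : Fin m, a = FreeMonoid.of (p i) * FreeMonoid.of (q i) ∧ b = 1) ∨
    (∃ i j : Fin m, i ≠ j ∧ a = FreeMonoid.of (p i) * FreeMonoid.of (q j) ∧
      b = FreeMonoid.of z) ∨
    (∃ y : PolyLetter m, a = FreeMonoid.of y * FreeMonoid.of z ∧ b = FreeMonoid.of z) ∨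
    (∃ y : PolyLetter m, a = FreeMonoid.of z * FreeMonoid.of y ∧ b = FreeMonoid.of z)

open PolyLetter in
/-- The zero letter annihilates every word on its right, not only letters. -/
theorem polyRel_z_mul {m : ℕ} (w : FreeMonoid (PolyLetter m)) :
    conGen (polyRel m) (FreeMonoid.of z * w) (FreeMonoid.of z) := by
  induction w using FreeMonoid.inductionOn' with
  | one => simpa using (conGen (polyRel m)).refl (FreeMonoid.of z)
  | of_mul y w ih =>
    have hy : conGen (polyRel m) (FreeMonoid.of z * FreeMonoid.of y) (FreeMonoid.of z) :=
      Con.le_conGen _ _ (Or.inr (Or.inr (Or.inr ⟨y, rfl, rfl⟩)))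
    rw [← mul_assoc]
    exact ((conGen (polyRel m)).mul hy ((conGen (polyRel m)).refl w)).trans ih

open PolyLetter in
/-- Every word over the alphabet of `P_m'` is congruent to `z` or to a word
`v * u` with `v` consisting only of closing brackets and `u` only of opening
brackets. -/
theorem stmt_12 (m : ℕ) (hm : 1 ≤ m) (w : FreeMonoid (PolyLetter m)) :
    conGen (polyRel m) w (FreeMonoid.of z) ∨
      ∃ v u : FreeMonoid (PolyLetter m),
        (∀ c ∈ v.toList, ∃ i : Fin m, c = q i) ∧
        (∀ c ∈ u.toList, ∃ i : Fin m, c = p i) ∧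
        conGen (polyRel m) w (v * u) := by
  have hrefl := (conGen (polyRel m)).refl
  induction w using FreeMonoid.inductionOn' with
  | one =>
    refine Or.inr ⟨1, 1, by simp, by simp, ?_⟩
    simpa using hrefl 1
  | of_mul x w ih =>
    rcases ih with ih | ⟨v, u, hv, hu, ih⟩
    · exact Or.inl (((conGen (polyRel m)).mul (hrefl (FreeMonoid.of x)) ih).trans
        (Con.le_conGen _ _ (Or.inr (Or.inr (Or.inl ⟨x, rfl, rfl⟩)))))
    have step := (conGen (polyRel m)).mul (hrefl (FreeMonoid.of x)) ih
    cases x with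
    | z => exact Or.inl (polyRel_z_mul w)
    | q i =>
      refine Or.inr ⟨FreeMonoid.of (q i) * v, u, ?_, hu, ?_⟩
      · intro c hc
        simp only [FreeMonoid.toList_of_mul, List.mem_cons] at hc
        rcases hc with rfl | hc
        · exact ⟨i, rfl⟩
        · exact hv c hc
      · rwa [mul_assoc]
    | p i =>
      cases v using FreeMonoid.casesOn with
      | one =>
        refine Or.inr ⟨1, FreeMonoid.of (p i) * u, by simp, ?_, ?_⟩
        · intro c hc
          simp only [FreeMonoid.toList_of_mul, List.mem_cons] at hc
          rcases hc with rfl | hc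
          · exact ⟨i, rfl⟩
          · exact hu c hc
        · simpa using step
      | of_mul y v =>
        obtain ⟨j, rfl⟩ := hv y (by simp)
        rw [mul_assoc, ← mul_assoc (FreeMonoid.of (p i))] at step
        by_cases hij : i = j
        · subst hij
          have hpq : conGen (polyRel m) (FreeMonoid.of (p i) * FreeMonoid.of (q i)) 1 :=
            Con.le_conGen _ _ (Or.inl ⟨i, rfl, rfl⟩)
          refine Or.inr ⟨v, u, fun c hc => hv c (by simp [hc]), hu, ?_⟩
          have h := (conGen (polyRel m)).mul hpq (hrefl (v * u))
          rw [one_mul] at h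
          exact step.trans h
        · have hpq : conGen (polyRel m) (FreeMonoid.of (p i) * FreeMonoid.of (q j))
              (FreeMonoid.of z) :=
            Con.le_conGen _ _ (Or.inr (Or.inl ⟨i, j, hij, rfl, rfl⟩))
          exact Or.inl ((step.trans ((conGen (polyRel m)).mul hpq (hrefl (v * u)))).trans
            (polyRel_z_mul _))
end

section
/- Let m ≥ 1, let Y and the congruence σ be as follows: Y is the alphabet with letters p_0, …, p_{m−1}, q_0, …, q_{m−1}, z, and σ is the monoid congruence on the free monoid over Y generated by p_i·q_i ~ 1 for i < m, p_i·q_j ~ z for i ≠ j < m, and y·z ~ z, z·y ~ z for every letter y ∈ Y. Call a word a normal form if it is the one-letter word z or of the form v·u with v a word over {q_0,…,q_{m−1}} and u a word over {p_0,…,p_{m−1}}. Then σ is injective on normal forms: if two normal-form words are σ-congruent, they are equal. -/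
open PolyLetter in
/-- A word is a normal form if it is the letter `z` or of the form `v * u` with
`v` over the closing brackets and `u` over the opening brackets. -/
def IsNormalForm {m : ℕ} (w : FreeMonoid (PolyLetter m)) : Prop :=
  w = FreeMonoid.of z ∨
    ∃ v u : FreeMonoid (PolyLetter m),
      w = v * u ∧ (∀ c ∈ v.toList, ∃ i : Fin m, c = q i) ∧
        (∀ c ∈ u.toList, ∃ i : Fin m, c = p i)

/-- Right multiplication of a normal form by a letter. The state `some (v, u)` stores the normal
form whose `q`-indices are `v` and `p`-indices are `u`, both listed from right to left; `none`
stores `z`. -/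
def polyStep {m : ℕ} : Option (List (Fin m) × List (Fin m)) → PolyLetter m →
    Option (List (Fin m) × List (Fin m))
  | none, _ => none
  | some _, .z => none
  | some (v, u), .p i => some (v, i :: u)
  | some (v, []), .q j => some (j :: v, [])
  | some (v, i :: u), .q j => if i = j then some (v, u) else none

/-- The right action of a word on states, reading letters from left to right. -/
def polyEval {m : ℕ} (w : FreeMonoid (PolyLetter m)) (s : Option (List (Fin m) × List (Fin m))) :
    Option (List (Fin m) × List (Fin m)) :=
  w.toList.foldl polyStep s

theorem polyEval_mul {m : ℕ} (a b : FreeMonoid (PolyLetter m))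
    (s : Option (List (Fin m) × List (Fin m))) :
    polyEval (a * b) s = polyEval b (polyEval a s) := by
  simp [polyEval, FreeMonoid.toList_mul]

/-- The congruence identifying words that act identically on states. -/
def actionCon (m : ℕ) : Con (FreeMonoid (PolyLetter m)) where
  r a b := ∀ s, polyEval a s = polyEval b s
  iseqv := ⟨fun _ _ => rfl, fun h s => (h s).symm, fun h h' s => (h s).trans (h' s)⟩
  mul' h h' s := by rw [polyEval_mul, polyEval_mul, h, h']

theorem conGen_le_actionCon (m : ℕ) : conGen (polyRel m) ≤ actionCon m := by
  refine Con.conGen_le.mpr ?_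
  rintro a b (⟨i, rfl, rfl⟩ | ⟨i, j, hij, rfl, rfl⟩ | ⟨y, rfl, rfl⟩ | ⟨y, rfl, rfl⟩) s
  · rcases s with _ | ⟨v, u⟩ <;> simp [polyEval, polyStep]
  · rcases s with _ | ⟨v, u⟩ <;> simp [polyEval, polyStep, hij]
  · have hz : ∀ t : Option (List (Fin m) × List (Fin m)), polyStep t .z = none := by
      rintro (_ | _) <;> rfl
    simp [polyEval, hz]
  · rcases s with _ | ⟨v, u⟩ <;> simp [polyEval, polyStep]

/-- The normal form stored in a state. -/
def polyDecode {m : ℕ} : Option (List (Fin m) × List (Fin m)) → FreeMonoid (PolyLetter m)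
  | none => FreeMonoid.of .z
  | some (v, u) => FreeMonoid.ofList (v.reverse.map .q ++ u.reverse.map .p)

theorem foldl_map_q {m : ℕ} (l v : List (Fin m)) :
    (l.map PolyLetter.q).foldl polyStep (some (v, [])) = some (l.reverse ++ v, []) := by
  induction l generalizing v with
  | nil => rfl
  | cons a l ih => simp [polyStep, ih]

theorem foldl_map_p {m : ℕ} (l v u : List (Fin m)) :
    (l.map PolyLetter.p).foldl polyStep (some (v, u)) = some (v, l.reverse ++ u) := by
  induction l generalizing u with
  | nil => rfl
  | cons a l ih => simp [polyStep, ih]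

theorem exists_map_eq {α β : Type*} (f : α → β) (l : List β) (h : ∀ c ∈ l, ∃ i, c = f i) :
    ∃ l' : List α, l'.map f = l := by
  have : l ∈ Set.range (List.map f) := by
    rw [Set.range_list_map]
    exact fun c hc => (h c hc).imp fun _ => Eq.symm
  exact this

/-- Reading a normal form from the empty state stores exactly that normal form. -/
theorem decode_eval {m : ℕ} (w : FreeMonoid (PolyLetter m)) (h : IsNormalForm w) :
    polyDecode (polyEval w (some ([], []))) = w := by
  rcases h with rfl | ⟨v, u, rfl, hv, hu⟩
  · rfl
  · obtain ⟨v', hv'⟩ := exists_map_eq _ _ hv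
    obtain ⟨u', hu'⟩ := exists_map_eq _ _ hu
    rw [polyEval_mul, polyEval, polyEval, ← hv', ← hu', foldl_map_q, foldl_map_p]
    simp [polyDecode, hv', hu']

/-- Distinct normal forms are not congruent: the congruence of `P_m'` is
injective on normal forms. -/
theorem stmt_13 (m : ℕ) (hm : 1 ≤ m) (w₁ w₂ : FreeMonoid (PolyLetter m))
    (h₁ : IsNormalForm w₁) (h₂ : IsNormalForm w₂)
    (hcong : conGen (polyRel m) w₁ w₂) : w₁ = w₂ := by
  rw [← decode_eval w₁ h₁, ← decode_eval w₂ h₂, conGen_le_actionCon m hcong]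
end

section
/- Let m ≥ 1, let X be a type (an auxiliary alphabet), and let Y be the alphabet consisting of letters p_0, …, p_{m−1}, q_0, …, q_{m−1}, a letter z, and a letter for each element of X. Let σ be the monoid congruence on the free monoid over Y generated by: p_i·q_i ~ 1 for i < m; p_i·q_j ~ z for i ≠ j < m; y·z ~ z and z·y ~ z for every letter y ∈ Y; and the commutation relations x·d ~ d·x for every x ∈ X and every bracket letter d ∈ {p_0,…,p_{m−1},q_0,…,q_{m−1}}. Then every word w over Y is σ-congruent either to the one-letter word z or to a word of the form v·t·u where v is a word over {q_0,…,q_{m−1}}, t is a word over X, and u is a word over {p_0,…,p_{m−1}}. -/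
/-!
Prepend letters one at a time. Modulo the relations, `z` absorbs everything, so it is enough to
see what a letter does to a normal form `v * t * u`. A letter `q i` joins `v`; a letter `x a`
commutes past `v` and joins `t`. A letter `p i` either meets the first letter `q j` of `v`, where
the pair cancels or produces `z`, or else `v` is empty and `p i` commutes past `t` and joins `u`.
The computation is done in the quotient monoid, where the congruence becomes equality.
-/

/-- The alphabet with opening brackets `p i`, closing brackets `q i`, a formal
zero letter `z`, and a letter `x a` for every element `a` of the auxiliary
alphabet `X`. -/
inductive PolyXLetter (m : ℕ) (X : Type*) : Type _
  | p (i : Fin m)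
  | q (i : Fin m)
  | z
  | x (a : X)

open PolyXLetter in
/-- A letter is a bracket if it is some `p i` or some `q i`. -/
def IsBracket {m : ℕ} {X : Type*} (d : PolyXLetter m X) : Prop :=
  (∃ i : Fin m, d = p i) ∨ (∃ i : Fin m, d = q i)

open PolyXLetter in
/-- The generating relations of the extended polycyclic monoid `P_m'[X]`:
match `p_i q_i ~ 1`, mismatch `p_i q_j ~ z` for `i ≠ j`, `z` annihilating, and
elements of `X` commuting with all brackets. -/
def polyXRel (m : ℕ) (X : Type*) :
    FreeMonoid (PolyXLetter m X) → FreeMonoid (PolyXLetter m X) → Prop :=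
  fun a b =>
    (∃ i : Fin m, a = FreeMonoid.of (p i) * FreeMonoid.of (q i) ∧ b = 1) ∨
    (∃ i j : Fin m, i ≠ j ∧ a = FreeMonoid.of (p i) * FreeMonoid.of (q j) ∧
      b = FreeMonoid.of z) ∨
    (∃ y : PolyXLetter m X, a = FreeMonoid.of y * FreeMonoid.of z ∧ b = FreeMonoid.of z) ∨
    (∃ y : PolyXLetter m X, a = FreeMonoid.of z * FreeMonoid.of y ∧ b = FreeMonoid.of z) ∨
    (∃ (c : X) (d : PolyXLetter m X), IsBracket d ∧
      a = FreeMonoid.of (x c) * FreeMonoid.of d ∧ b = FreeMonoid.of d * FreeMonoid.of (x c))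

namespace PolyX

variable {m : ℕ} {X : Type*}

/-- The projection of words onto the quotient monoid `P_m'[X]`. -/
abbrev proj (m : ℕ) (X : Type*) :
    FreeMonoid (PolyXLetter m X) →* (conGen (polyXRel m X)).Quotient :=
  (conGen (polyXRel m X)).mk'

lemma proj_eq_iff {a b : FreeMonoid (PolyXLetter m X)} :
    proj m X a = proj m X b ↔ conGen (polyXRel m X) a b :=
  (conGen (polyXRel m X)).eq

lemma proj_eq_of_rel {a b : FreeMonoid (PolyXLetter m X)} (h : polyXRel m X a b) :
    proj m X a = proj m X b :=
  proj_eq_iff.2 (ConGen.Rel.of _ _ h)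

open PolyXLetter

lemma proj_p_q_self (i : Fin m) :
    proj m X (.of (p i)) * proj m X (.of (q i)) = 1 := by
  rw [← map_mul, ← map_one (proj m X)]
  exact proj_eq_of_rel (.inl ⟨i, rfl, rfl⟩)

lemma proj_p_q_of_ne {i j : Fin m} (h : i ≠ j) :
    proj m X (.of (p i)) * proj m X (.of (q j)) = proj m X (.of z) := by
  rw [← map_mul]
  exact proj_eq_of_rel (.inr (.inl ⟨i, j, h, rfl, rfl⟩))

lemma proj_of_mul_z (y : PolyXLetter m X) :
    proj m X (.of y) * proj m X (.of z) = proj m X (.of z) := by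
  rw [← map_mul]
  exact proj_eq_of_rel (.inr (.inr (.inl ⟨y, rfl, rfl⟩)))

lemma proj_z_mul_of (y : PolyXLetter m X) :
    proj m X (.of z) * proj m X (.of y) = proj m X (.of z) := by
  rw [← map_mul]
  exact proj_eq_of_rel (.inr (.inr (.inr (.inl ⟨y, rfl, rfl⟩))))

lemma proj_z_mul (w : FreeMonoid (PolyXLetter m X)) :
    proj m X (.of z) * proj m X w = proj m X (.of z) := by
  induction w using FreeMonoid.inductionOn' with
  | one => rw [map_one, mul_one]
  | of_mul y w ih => rw [map_mul, ← mul_assoc, proj_z_mul_of, ih]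

lemma commute_x_bracket (a : X) {d : PolyXLetter m X} (hd : IsBracket d) :
    Commute (proj m X (.of (x a))) (proj m X (.of d)) := by
  rw [Commute, SemiconjBy, ← map_mul, ← map_mul]
  exact proj_eq_of_rel (.inr (.inr (.inr (.inr ⟨a, d, hd, rfl, rfl⟩))))

lemma commute_word {g : (conGen (polyXRel m X)).Quotient} (w : FreeMonoid (PolyXLetter m X))
    (h : ∀ c ∈ w.toList, Commute g (proj m X (.of c))) : Commute g (proj m X w) := by
  induction w using FreeMonoid.inductionOn' with
  | one => rw [map_one]; exact Commute.one_right g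
  | of_mul y w ih =>
    simp only [FreeMonoid.toList_of_mul, List.forall_mem_cons] at h
    rw [map_mul]
    exact h.1.mul_right (ih h.2)

end PolyX

open PolyXLetter in
/-- Every word over the alphabet of `P_m'[X]` is congruent to `z` or to a word
`v * t * u` with `v` over the closing brackets, `t` over `X` and `u` over the
opening brackets. -/
theorem stmt_14 (m : ℕ) (hm : 1 ≤ m) (X : Type*) (w : FreeMonoid (PolyXLetter m X)) :
    conGen (polyXRel m X) w (FreeMonoid.of z) ∨
      ∃ v t u : FreeMonoid (PolyXLetter m X),
        (∀ c ∈ v.toList, ∃ i : Fin m, c = q i) ∧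
        (∀ c ∈ t.toList, ∃ a : X, c = x a) ∧
        (∀ c ∈ u.toList, ∃ i : Fin m, c = p i) ∧
        conGen (polyXRel m X) w (v * t * u) := by
  simp only [← PolyX.proj_eq_iff]
  induction w using FreeMonoid.inductionOn' with
  | one => exact .inr ⟨1, 1, 1, by simp, by simp, by simp, by simp⟩
  | of_mul y w ih =>
    rcases ih with hw | ⟨v, t, u, hv, ht, hu, hw⟩
    · left
      rw [map_mul, hw, PolyX.proj_of_mul_z]
    · cases y with
      | z => exact .inl (by rw [map_mul, PolyX.proj_z_mul])
      | q i =>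
        refine .inr ⟨.of (q i) * v, t, u, ?_, ht, hu, ?_⟩
        · simpa only [FreeMonoid.toList_of_mul, List.forall_mem_cons] using ⟨⟨i, rfl⟩, hv⟩
        · simp only [map_mul, hw, mul_assoc]
      | x a =>
        refine .inr ⟨v, .of (x a) * t, u, hv, ?_, hu, ?_⟩
        · simpa only [FreeMonoid.toList_of_mul, List.forall_mem_cons] using ⟨⟨a, rfl⟩, ht⟩
        · have hc : Commute (PolyX.proj m X (.of (x a))) (PolyX.proj m X v) :=
            PolyX.commute_word v fun c hc => PolyX.commute_x_bracket a (.inr (hv c hc))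
          rw [map_mul, hw]
          simp only [map_mul, ← mul_assoc, hc.eq]
      | p i =>
        cases v using FreeMonoid.casesOn with
        | one =>
          refine .inr ⟨1, t, .of (p i) * u, by simp, ht, ?_, ?_⟩
          · simpa only [FreeMonoid.toList_of_mul, List.forall_mem_cons] using ⟨⟨i, rfl⟩, hu⟩
          · have hc : Commute (PolyX.proj m X (.of (p i))) (PolyX.proj m X t) :=
              PolyX.commute_word t fun c hc => by
                obtain ⟨a, rfl⟩ := ht c hc
                exact (PolyX.commute_x_bracket a (.inl ⟨i, rfl⟩)).symm
            rw [map_mul, hw]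
            simp only [map_mul, one_mul, ← mul_assoc, hc.eq]
        | of_mul d v =>
          simp only [FreeMonoid.toList_of_mul, List.forall_mem_cons] at hv
          obtain ⟨⟨j, rfl⟩, hv⟩ := hv
          by_cases hij : i = j
          · subst hij
            refine .inr ⟨v, t, u, hv, ht, hu, ?_⟩
            rw [map_mul, hw]
            simp only [map_mul, ← mul_assoc, PolyX.proj_p_q_self, one_mul]
          · left
            rw [map_mul, hw]
            simp only [map_mul, ← mul_assoc, PolyX.proj_p_q_of_ne hij, PolyX.proj_z_mul]
end

section
/- Let K be a Kleene algebra and s, a, f ∈ K. Then s·(a + f·s)^*·f = (s·a^*·f)·(s·a^*·f)^*. -/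
open Computability

/-!
Write `w = s * a∗ * f`. Both inequalities follow by star induction. For `≤`, the element
`a∗ * f * w∗` dominates `f` and is closed under left multiplication by `a + f * s`, since
`f * s * (a∗ * f * w∗) = f * (w * w∗) ≤ f * w∗`. For `≥`, the element `s * (a + f * s)∗ * f`
dominates `w` and is closed under right multiplication by `w`, since `f * s` and `a∗` both lie
below `(a + f * s)∗`, which is idempotent under multiplication.
-/

theorem stmt_18 {K : Type*} [KleeneAlgebra K] (s a f : K) :
    s * (a + f * s)∗ * f = (s * a∗ * f) * (s * a∗ * f)∗ := by
  apply le_antisymm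
  · have hf : f * (s * a∗ * f)∗ ≤ a∗ * f * (s * a∗ * f)∗ := by
      rw [mul_assoc a∗ f]
      apply le_mul_of_one_le_left'
      exact one_le_kstar
    have key : (a + f * s)∗ * f ≤ a∗ * f * (s * a∗ * f)∗ := by
      apply kstar_mul_le
      · refine le_trans ?_ hf
        apply le_mul_of_one_le_right'
        exact one_le_kstar
      · rw [add_mul]
        apply add_le
        · simp only [← mul_assoc]
          gcongr
          exact mul_kstar_le_kstar
        · calc f * s * (a∗ * f * (s * a∗ * f)∗)
              = f * ((s * a∗ * f) * (s * a∗ * f)∗) := by simp only [mul_assoc]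
            _ ≤ f * (s * a∗ * f)∗ := by
              gcongr
              exact mul_kstar_le_kstar
            _ ≤ _ := hf
    calc s * (a + f * s)∗ * f = s * ((a + f * s)∗ * f) := mul_assoc _ _ _
      _ ≤ s * (a∗ * f * (s * a∗ * f)∗) := by gcongr
      _ = _ := by simp only [mul_assoc]
  · have ha : a∗ ≤ (a + f * s)∗ := kstar_mono le_self_add
    have hfs : f * s ≤ (a + f * s)∗ := le_add_self.trans le_kstar
    apply mul_kstar_le
    · gcongr
    · calc s * (a + f * s)∗ * f * (s * a∗ * f)
          = s * ((a + f * s)∗ * (f * s) * a∗) * f := by simp only [mul_assoc]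
        _ ≤ s * ((a + f * s)∗ * (a + f * s)∗ * (a + f * s)∗) * f := by gcongr
        _ = _ := by rw [kstar_mul_kstar, kstar_mul_kstar]
end

section
/- Let K be a Kleene algebra and a, w, b, d ∈ K with w·d = d·w. Then b·(a + w·d·b)^*·d = (b·a^*·d)·(w·b·a^*·d)^*. -/
/-!
With `w * d = d * w`, denesting the star of the sum gives
`(a + w * d * b)∗ = a∗ * (d * (w * b * a∗))∗`, and the sliding rule then moves the trailing `d`
to the left through the star: `(d * y)∗ * d = d * (y * d)∗` with `y = w * b * a∗`. Both rules are
proved from the induction axioms of Kleene algebra.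
-/

open Computability

theorem kstar_sliding {K : Type*} [KleeneAlgebra K] (x y : K) :
    (x * y)∗ * x = x * (y * x)∗ := by
  apply le_antisymm
  · apply kstar_mul_le
    · exact le_mul_of_one_le_right' one_le_kstar
    · calc x * y * (x * (y * x)∗) = x * (y * x * (y * x)∗) := by simp only [mul_assoc]
        _ ≤ x * (y * x)∗ := by grw [mul_kstar_le_kstar]
  · apply mul_kstar_le
    · exact le_mul_of_one_le_left' one_le_kstar
    · calc (x * y)∗ * x * (y * x) = (x * y)∗ * (x * y) * x := by simp only [mul_assoc]
        _ ≤ (x * y)∗ * x := by grw [kstar_mul_le_kstar]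

theorem kstar_denesting {K : Type*} [KleeneAlgebra K] (a e : K) :
    (a + e)∗ = a∗ * (e * a∗)∗ := by
  apply le_antisymm
  · apply kstar_le_of_mul_le_right
    · exact one_le_mul one_le_kstar one_le_kstar
    · rw [add_mul]
      apply add_le
      · rw [← mul_assoc]
        grw [mul_kstar_le_kstar]
      · rw [← mul_assoc]
        grw [mul_kstar_le_kstar]
        exact le_mul_of_one_le_left' one_le_kstar
  · have ha : a∗ ≤ (a + e)∗ := kstar_mono le_self_add
    have he : e ≤ (a + e)∗ := le_add_self.trans le_kstar
    have hea : (e * a∗)∗ ≤ (a + e)∗ := by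
      apply kstar_le_of_mul_le_left one_le_kstar
      calc (a + e)∗ * (e * a∗) ≤ (a + e)∗ * ((a + e)∗ * (a + e)∗) :=
            mul_le_mul_right (mul_le_mul' he ha) _
        _ = (a + e)∗ := by simp only [kstar_mul_kstar]
    exact (mul_le_mul' ha hea).trans_eq (kstar_mul_kstar _)

theorem stmt_19 {K : Type*} [KleeneAlgebra K] (a w b d : K)
    (hcomm : w * d = d * w) :
    b * (a + w * d * b)∗ * d = (b * a∗ * d) * (w * b * a∗ * d)∗ := by
  have h := kstar_sliding d (w * b * a∗)
  rw [kstar_denesting, hcomm]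
  simp only [mul_assoc] at h ⊢
  rw [h]
end
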